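/- Let D be a Mori monoid (commutative cancellative monoid with ACC on divisorial ideals). Then every length set L(a), for a ∈ M, is finite and nonempty. -/

import Mathlib

/-- `(M : X) = {x ∈ q(M) : xX ⊆ M}`, computed inside the quotient group `G`. -/
def colonSet {G : Type*} [CommGroup G] (M : Submonoid G) (X : Set G) : Set G :=
  {x : G | ∀ y ∈ X, x * y ∈ M}

/-- The divisorial closure `X_v = (M : (M : X))`. -/
def vCl {G : Type*} [CommGroup G] (M : Submonoid G) (X : Set G) : Set G :=
  colonSet M (colonSet M X)

/-- `I` is a divisorial ideal of `M`: a subset of `M` with `I_v = I`. -/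
def IsDivisorial {G : Type*} [CommGroup G] (M : Submonoid G) (I : Set G) : Prop :=
  I ⊆ (M : Set G) ∧ vCl M I = I

/-- `M` satisfies the ascending chain condition on divisorial ideals (`M` is Mori). -/
def MoriACC {G : Type*} [CommGroup G] (M : Submonoid G) : Prop :=
  ∀ f : ℕ → Set G, (∀ n, IsDivisorial M (f n)) → (∀ n, f n ⊆ f (n + 1)) →
    ∃ N, ∀ n, N ≤ n → f n = f N

/-- `a` is an atom of `M`: a non-unit of `M` such that in any factorization `a = b * c`
with `b, c ∈ M`, one of `b, c` is a unit of `M`. -/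
def IsAtomOf {G : Type*} [CommGroup G] (M : Submonoid G) (a : G) : Prop :=
  a ∈ M ∧ a⁻¹ ∉ M ∧ ∀ b c : G, b ∈ M → c ∈ M → a = b * c → b⁻¹ ∈ M ∨ c⁻¹ ∈ M

/-- The length set of `a` in `M`, with the convention `L(a) = {0}` for units of `M`. -/
def LengthSetOf {G : Type*} [CommGroup G] (M : Submonoid G) (a : G) : Set ℕ :=
  {k | (a⁻¹ ∈ M ∧ k = 0) ∨
    ∃ l : List G, l.length = k ∧ (∀ x ∈ l, IsAtomOf M x) ∧ l.prod = a}

section aux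
variable {G : Type*} [CommGroup G]

theorem colon_anti (M : Submonoid G) {X Y : Set G} (h : X ⊆ Y) : colonSet M Y ⊆ colonSet M X :=
  fun _ hx y hy => hx y (h hy)

theorem sub_vCl (M : Submonoid G) (X : Set G) : X ⊆ vCl M X := by
  intro x hx y hy
  rw [mul_comm]; exact hy x hx

theorem vCl_colon (M : Submonoid G) (X : Set G) : vCl M (colonSet M X) = colonSet M X :=
  Set.Subset.antisymm (colon_anti M (sub_vCl M X)) (sub_vCl M _)

theorem isDiv_colon (M : Submonoid G) (X : Set G) (h : colonSet M X ⊆ (M : Set G)) :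
    IsDivisorial M (colonSet M X) := ⟨h, vCl_colon M X⟩

theorem isDiv_mul (M : Submonoid G) {I : Set G} (h : IsDivisorial M I) {x m : G}
    (hx : x ∈ I) (hm : m ∈ M) : m * x ∈ I := by
  rw [← h.2] at hx ⊢
  intro y hy
  rw [mul_assoc]
  exact M.mul_mem hm (hx y hy)

theorem isDiv_top (M : Submonoid G) : IsDivisorial M (M : Set G) := by
  have : (M : Set G) = colonSet M {1} := by
    ext x; simp [colonSet]
  rw [this]
  refine isDiv_colon M _ ?_
  rw [← this]

theorem isDiv_inter (M : Submonoid G) {I J : Set G} (hI : IsDivisorial M I)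
    (hJ : vCl M J = J) : IsDivisorial M (I ∩ J) := by
  have : I ∩ J = colonSet M (colonSet M I ∪ colonSet M J) := by
    conv_lhs => rw [← hI.2, ← hJ]
    ext x
    simp only [vCl, colonSet, Set.mem_inter_iff, Set.mem_setOf_eq, Set.mem_union]
    constructor
    · rintro ⟨h1, h2⟩ y (h | h)
      · exact h1 y h
      · exact h2 y h
    · intro h
      exact ⟨fun y hy => h y (Or.inl hy), fun y hy => h y (Or.inr hy)⟩
  refine ⟨fun x hx => hI.1 hx.1, ?_⟩
  rw [this]; exact vCl_colon M _

theorem exists_maxi (M : Submonoid G) (hacc : MoriACC M) (C : Set G → Prop)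
    (hC : ∀ I, C I → IsDivisorial M I) {I₀ : Set G} (h0 : C I₀) :
    ∃ I, I₀ ⊆ I ∧ C I ∧ ∀ J, C J → I ⊆ J → J = I := by
  have wf : WellFoundedGT {I : Set G // IsDivisorial M I} := by
    rw [wellFoundedGT_iff_monotone_chain_condition]
    intro a
    obtain ⟨N, hN⟩ := hacc (fun n => (a n).1) (fun n => (a n).2)
      (fun n => a.monotone (Nat.le_succ n))
    exact ⟨N, fun m hm => Subtype.ext (hN m hm).symm⟩
  obtain ⟨I, ⟨hI, hI0⟩, hmax⟩ := wf.wf.has_min {I | C I.1 ∧ I₀ ⊆ I.1} ⟨⟨I₀, hC _ h0⟩, h0, subset_rfl⟩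
  refine ⟨I.1, hI0, hI, fun J hJ hIJ => ?_⟩
  by_contra hne
  refine hmax ⟨J, hC J hJ⟩ ⟨hJ, hI0.trans hIJ⟩ ?_
  exact lt_of_le_of_ne hIJ (fun h => hne (congrArg Subtype.val h).symm)

theorem exists_mini (M : Submonoid G) (hacc : MoriACC M) (b : G) (C : Set G → Prop)
    (hC : ∀ I, C I → IsDivisorial M I ∧ b ∈ I) {I₀ : Set G} (h0 : C I₀) :
    ∃ I, C I ∧ ∀ J, C J → J ⊆ I → J = I := by
  let φ : Set G → Set G := fun I => colonSet M {y | b * y ∈ I}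
  have hφ : ∀ I J, C I → C J → φ I = φ J → I = J := by
    have key : ∀ I, ∀ x, x ∈ colonSet M I ↔ b * x ∈ φ I := by
      intro I x
      constructor
      · intro h y hy
        have := h _ hy
        rwa [show b * x * y = x * (b * y) by rw [mul_left_comm, mul_assoc]]
      · intro h y hy
        have := h (b⁻¹ * y) (by simpa using hy)
        rwa [show b * x * (b⁻¹ * y) = x * y by rw [mul_comm b x, mul_assoc]; simp] at this
    intro I J hI hJ h
    rw [← (hC I hI).1.2, ← (hC J hJ).1.2, vCl, vCl]
    congr 1
    ext x
    rw [key I x, key J x, h]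
  have hφm : ∀ I J : Set G, J ⊆ I → φ I ⊆ φ J := fun I J h => colon_anti M (fun y hy => h hy)
  obtain ⟨K, -, ⟨I, hI, rfl⟩, hmax⟩ := exists_maxi M hacc (fun K => ∃ I, C I ∧ φ I = K) (by
    rintro K ⟨I, hI, rfl⟩
    refine isDiv_colon M _ ?_
    intro x hx
    simpa using hx 1 (by simpa using (hC I hI).2)) ⟨I₀, h0, rfl⟩
  exact ⟨I, hI, fun J hJ hJI => hφ _ _ hJ hI (hmax _ ⟨J, hJ, rfl⟩ (hφm _ _ hJI))⟩

/-- `P` is a maximal proper divisorial ideal. -/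
def MaxDiv (M : Submonoid G) (P : Set G) : Prop :=
  (IsDivisorial M P ∧ (1 : G) ∉ P) ∧ ∀ J, IsDivisorial M J ∧ (1 : G) ∉ J → P ⊆ J → J = P

theorem maxDiv_colon (M : Submonoid G) {P : Set G} (hP : MaxDiv M P) {x : G} (hx : x ∈ M)
    (hxP : x ∉ P) {z : G} (hz : z ∈ colonSet M P) (hzx : z * x ∈ M) : z ∈ M := by
  have hz' : z ∈ colonSet M (insert x P) := by
    rintro y (rfl | hy)
    · exact hzx
    · exact hz y hy
  have hd : IsDivisorial M (vCl M (insert x P)) := by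
    refine isDiv_colon M _ ?_
    intro w hw
    have := hw 1 (by
      rintro y (rfl | hy)
      · simpa using hx
      · simpa using hP.1.1.1 hy)
    simpa using this
  have h1 : (1 : G) ∈ vCl M (insert x P) := by
    by_contra h1
    have := hP.2 _ ⟨hd, h1⟩ ((Set.subset_insert x P).trans (sub_vCl M _))
    apply hxP
    rw [← this]
    exact sub_vCl M _ (Set.mem_insert x P)
  simpa using h1 z hz'

theorem maxDiv_prime (M : Submonoid G) {P : Set G} (hP : MaxDiv M P) {x y : G} (hx : x ∈ M)
    (hy : y ∈ M) (hxP : x ∉ P) (hyP : y ∉ P) : x * y ∉ P := by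
  intro hxy
  apply hP.1.2
  rw [← hP.1.1.2]
  intro z hz
  rw [one_mul]
  refine maxDiv_colon M hP hx hxP hz ?_
  refine maxDiv_colon M hP hy hyP ?_ ?_
  · intro p hp
    rw [mul_right_comm]
    exact M.mul_mem (hz p hp) hx
  · rw [mul_assoc]; exact hz _ hxy

theorem finite_char (M : Submonoid G) (hacc : MoriACC M) {b : G} (hb : b ∈ M) :
    {P | MaxDiv M P ∧ b ∈ P}.Finite := by
  obtain ⟨J, ⟨hJ, hfin⟩, hmin⟩ := exists_mini M hacc b
    (fun J => (IsDivisorial M J ∧ b ∈ J) ∧ {P | MaxDiv M P ∧ J ⊆ P}.Finite)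
    (fun I h => h.1) (I₀ := (M : Set G)) ⟨⟨isDiv_top M, hb⟩, by
      convert Set.finite_empty
      ext P
      simp only [Set.mem_setOf_eq, Set.mem_empty_iff_false, iff_false]
      rintro ⟨h, h2⟩
      exact h.1.2 (h2 M.one_mem)⟩
  refine hfin.subset ?_
  rintro P ⟨hP, hbP⟩
  refine ⟨hP, ?_⟩
  have := hmin (J ∩ P) ⟨⟨isDiv_inter M hJ.1 hP.1.1.2, hJ.2, hbP⟩, by
    refine (hfin.insert P).subset ?_
    rintro Q ⟨hQ, hsub⟩
    by_cases hJQ : J ⊆ Q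
    · exact Or.inr ⟨hQ, hJQ⟩
    · left
      obtain ⟨j, hj, hjQ⟩ := Set.not_subset.1 hJQ
      refine hP.2 Q hQ.1 ?_
      intro p hp
      by_contra hpQ
      refine maxDiv_prime M hQ (hJ.1.1 hj) (hP.1.1.1 hp) hjQ hpQ (hsub ⟨?_, ?_⟩)
      · rw [mul_comm]; exact isDiv_mul M hJ.1 hj (hP.1.1.1 hp)
      · exact isDiv_mul M hP.1.1 hp (hJ.1.1 hj)⟩ Set.inter_subset_left
  rw [← this]; exact Set.inter_subset_right

theorem exists_maxDiv (M : Submonoid G) (hacc : MoriACC M) {u : G} (hu : u ∈ M)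
    (hu' : u⁻¹ ∉ M) : ∃ P, MaxDiv M P ∧ u ∈ P := by
  obtain ⟨P, h0, hP, hmax⟩ := exists_maxi M hacc (fun J => IsDivisorial M J ∧ (1 : G) ∉ J)
    (fun _ h => h.1) (I₀ := colonSet M {u⁻¹}) ⟨isDiv_colon M _ (by
      intro x hx
      have := M.mul_mem (hx u⁻¹ rfl) hu
      simpa using this), by
      intro h
      exact hu' (by simpa using h u⁻¹ rfl)⟩
  refine ⟨P, ⟨hP, hmax⟩, h0 ?_⟩
  rintro y rfl
  simp

/-- `b` has at least `n` nonunit factors in `I`. -/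
def Many (M : Submonoid G) (b : G) (I : Set G) (n : ℕ) : Prop :=
  ∃ s : Multiset G, n ≤ s.card ∧ (∀ u ∈ s, u ∈ I ∧ u ∈ M ∧ u⁻¹ ∉ M) ∧ ∃ c ∈ M, s.prod * c = b

theorem pairing (M : Submonoid G) (I : Set G) (l : List G) :
    (∀ u ∈ l, u ∈ I ∧ u ∈ M ∧ u⁻¹ ∉ M) →
    ∃ s : Multiset G, l.length ≤ 2 * s.card + 1 ∧
      (∀ u ∈ s, (∃ x ∈ I, ∃ y ∈ I, u = x * y) ∧ u ∈ M ∧ u⁻¹ ∉ M) ∧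
      ∃ c ∈ M, s.prod * c = l.prod := by
  match l with
  | [] => exact fun _ => ⟨0, by simp, by simp, 1, M.one_mem, by simp⟩
  | [a] => exact fun h => ⟨0, by simp, by simp, a, (h a (by simp)).2.1, by simp⟩
  | a :: b :: t =>
    intro h
    obtain ⟨s, h1, h2, c, hc, h3⟩ := pairing M I t (fun u hu => h u (by simp [hu]))
    have ha := h a (by simp)
    have hb := h b (by simp)
    refine ⟨(a * b) ::ₘ s, by simp; omega, ?_, c, hc, ?_⟩
    · intro u hu
      rcases Multiset.mem_cons.1 hu with rfl | hu
      · refine ⟨⟨a, ha.1, b, hb.1, rfl⟩, M.mul_mem ha.2.1 hb.2.1, fun hh => ha.2.2 ?_⟩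
        have := M.mul_mem hh hb.2.1
        simpa using this
      · exact h2 u hu
    · simp [mul_assoc, h3]

theorem pigeon (s : Multiset G) (F : Finset (Set G)) (N : Set G → ℕ)
    [∀ K : Set G, DecidablePred (· ∈ K)]
    (hcov : ∀ u ∈ s, ∃ K ∈ F, u ∈ K) (hlt : ∀ K ∈ F, (s.filter (· ∈ K)).card ≤ N K) :
    s.card ≤ ∑ K ∈ F, N K := by
  refine le_trans ?_ (Finset.sum_le_sum hlt)
  clear hlt
  induction s using Multiset.induction_on with
  | empty => simp
  | cons a s ih =>
    have ih := ih (fun u hu => hcov u (Multiset.mem_cons_of_mem hu))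
    obtain ⟨K, hK, haK⟩ := hcov a (Multiset.mem_cons_self a s)
    rw [Multiset.card_cons, Nat.succ_le_iff]
    refine lt_of_le_of_lt ih (Finset.sum_lt_sum (fun L _ => ?_) ⟨K, hK, ?_⟩)
    · exact Multiset.card_le_card (Multiset.filter_le_filter _ (Multiset.le_cons_self s a))
    · rw [Multiset.filter_cons_of_pos _ haK, Multiset.card_cons]
      exact Nat.lt_succ_self _

theorem bounded (M : Submonoid G) (hacc : MoriACC M) {b : G} (hb : b ∈ M) :
    ∃ n, ¬ Many M b (M : Set G) n := by
  classical
  by_contra! hbad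
  obtain ⟨I, ⟨⟨hI, hbI⟩, hmany⟩, hmin⟩ := exists_mini M hacc b
    (fun I => (IsDivisorial M I ∧ b ∈ I) ∧ ∀ n, Many M b I n) (fun I h => h.1)
    (I₀ := (M : Set G)) ⟨⟨isDiv_top M, hb⟩, hbad⟩
  have hmem : ∀ J, IsDivisorial M J → (∀ n, Many M b J n) → b ∈ J := by
    intro J hJ hm
    obtain ⟨s, hs, hu, c, hc, rfl⟩ := hm 1
    obtain ⟨a, ha⟩ := Multiset.card_pos_iff_exists_mem.1 hs
    obtain ⟨t, rfl⟩ := Multiset.exists_cons_of_mem ha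
    have ht : t.prod ∈ M := M.multiset_prod_mem t
      (fun u hut => (hu u (Multiset.mem_cons_of_mem hut)).2.1)
    rw [Multiset.prod_cons, mul_assoc, mul_comm]
    exact isDiv_mul M hJ (hu a ha).1 (M.mul_mem ht hc)
  let II : Set G := {u | ∃ x ∈ I, ∃ y ∈ I, u = x * y}
  have hII : II ⊆ I := by
    rintro _ ⟨x, hx, y, hy, rfl⟩
    exact isDiv_mul M hI hy (hI.1 hx)
  have hvII : vCl M II ⊆ I := by
    rw [← hI.2]
    exact colon_anti M (colon_anti M hII)
  have hdII : IsDivisorial M (vCl M II) := isDiv_colon M _ (hvII.trans hI.1)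
  have hmII : ∀ n, Many M b (vCl M II) n := by
    intro n
    obtain ⟨s, hs, hu, c, hc, rfl⟩ := hmany (2 * n)
    obtain ⟨s', h1, h2, c', hc', h3⟩ := pairing M I s.toList
      (fun u h => hu u (Multiset.mem_toList.1 h))
    rw [Multiset.length_toList] at h1
    rw [Multiset.prod_toList] at h3
    refine ⟨s', by omega, fun u h => ⟨sub_vCl M _ (h2 u h).1, (h2 u h).2⟩, c' * c,
      M.mul_mem hc' hc, ?_⟩
    rw [← mul_assoc, h3]
  have heq : vCl M II = I := hmin _ ⟨⟨hdII, hmem _ hdII hmII⟩, hmII⟩ hvII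
  have star : ∀ z, (∀ x ∈ I, ∀ y ∈ I, z * x * y ∈ M) → z ∈ colonSet M I := by
    intro z hz
    rw [← heq]
    refine sub_vCl M (colonSet M II) ?_
    rintro _ ⟨x, hx, y, hy, rfl⟩
    rw [← mul_assoc]; exact hz x hx y hy
  let T : Submonoid G :=
    { carrier := colonSet M I
      one_mem' := fun y hy => by simpa using hI.1 hy
      mul_mem' := by
        intro s t hs ht
        refine star _ (fun x hx y hy => ?_)
        rw [show s * t * x * y = (s * x) * (t * y) by rw [mul_assoc s t x, mul_mul_mul_comm, mul_assoc, mul_assoc, mul_left_comm t, mul_comm, mul_assoc]; simp [mul_comm, mul_left_comm]]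
        exact M.mul_mem (hs x hx) (ht y hy) }
  have hT : ∀ z, z ∈ T ↔ z ∈ colonSet M I := fun z => Iff.rfl
  have hMT : ∀ z ∈ M, z ∈ T := fun z hz x hx => M.mul_mem hz (hI.1 hx)
  have hTI : ∀ t ∈ T, ∀ x ∈ I, t * x ∈ I := by
    intro t ht x hx
    rw [← hI.2]
    intro s hs
    have := T.mul_mem ht ((hT s).2 hs) x hx
    rwa [mul_right_comm]
  have hTdiv : ∀ K, vCl T K = K → ∃ Y, K = colonSet M Y := by
    intro K hK
    refine ⟨{w | ∃ y ∈ colonSet T K, ∃ i ∈ I, w = y * i}, ?_⟩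
    conv_lhs => rw [← hK]
    ext x
    constructor
    · rintro h _ ⟨y, hy, i, hi, rfl⟩
      rw [← mul_assoc]; exact h y hy i hi
    · intro h y hy i hi
      rw [mul_assoc]; exact h _ ⟨y, hy, i, hi, rfl⟩
  have hTacc : MoriACC T := by
    intro f hf hmono
    obtain ⟨N, hN⟩ := hacc (fun n => {x | b⁻¹ * x ∈ f n}) (by
      intro n
      obtain ⟨Y, hY⟩ := hTdiv _ (hf n).2
      have : {x | b⁻¹ * x ∈ f n} = colonSet M {w | b * w ∈ Y} := by
        rw [hY]
        ext x
        constructor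
        · intro h w hw
          have := h _ hw
          rwa [show b⁻¹ * x * (b * w) = x * w by rw [mul_comm b⁻¹ x, mul_assoc]; simp] at this
        · intro h y hy
          have := h (b⁻¹ * y) (by simpa using hy)
          rwa [show b⁻¹ * x * y = x * (b⁻¹ * y) by rw [mul_comm b⁻¹ x, mul_assoc]]
      rw [this]
      refine isDiv_colon M _ ?_
      rw [← this]
      intro x hx
      have := (hf n).1 hx b hbI
      simpa [mul_comm] using this) (fun n x hx => hmono n hx)
    refine ⟨N, fun n hn => ?_⟩
    ext x
    have := Set.ext_iff.1 (hN n hn) (b * x)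
    simpa using this
  -- units
  have hunit : ∀ u ∈ I, u⁻¹ ∉ M → u⁻¹ ∉ T := by
    intro u hu huM huT
    have h1 : (1 : G) ∈ I := by simpa using hTI _ huT u hu
    exact huM (by simpa using huT 1 h1)
  have hK : ∀ K, MaxDiv T K → ∃ n, ¬ Many M b (I ∩ K) n := by
    intro K hK
    by_contra! hm
    have hKM : vCl M K = K := by
      obtain ⟨Y, rfl⟩ := hTdiv K hK.1.1.2
      exact vCl_colon M Y
    have hd := isDiv_inter M hI hKM
    have hIK := hmin _ ⟨⟨hd, hmem _ hd hm⟩, hm⟩ Set.inter_subset_left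
    have hIK' : I ⊆ K := by rw [← hIK]; exact Set.inter_subset_right
    apply hK.1.2
    rw [← hK.1.1.2]
    intro z hz
    rw [one_mul]
    exact star z (fun x hx y hy => hz x (hIK' hx) y hy)
  choose! N hN using hK
  let F := (finite_char T hTacc (hMT b hb)).toFinset
  obtain ⟨s, hs, hu, c, hc, hprod⟩ := hmany (∑ K ∈ F, N K + 1)
  have := pigeon s F N (by
    intro u hus
    obtain ⟨P, hP, huP⟩ := exists_maxDiv T hTacc (hMT u (hu u hus).2.1)
      (hunit u (hu u hus).1 (hu u hus).2.2)
    refine ⟨P, ?_, huP⟩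
    simp only [F, Set.Finite.mem_toFinset, Set.mem_setOf_eq]
    refine ⟨hP, ?_⟩
    obtain ⟨t, rfl⟩ := Multiset.exists_cons_of_mem hus
    have ht : t.prod ∈ M := M.multiset_prod_mem t
      (fun u hut => (hu u (Multiset.mem_cons_of_mem hut)).2.1)
    rw [← hprod, Multiset.prod_cons, mul_assoc, mul_comm]
    exact isDiv_mul T hP.1.1 huP (hMT _ (M.mul_mem ht hc))) (by
    intro K hKF
    simp only [F, Set.Finite.mem_toFinset, Set.mem_setOf_eq] at hKF
    by_contra! hlt
    refine hN K hKF.1 ⟨s.filter (· ∈ K), hlt.le, ?_,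
      (s.filter (fun x => ¬ x ∈ K)).prod * c, M.mul_mem (M.multiset_prod_mem _ ?_) hc, ?_⟩
    · intro u h
      obtain ⟨h1, h2⟩ := Multiset.mem_filter.1 h
      exact ⟨⟨(hu u h1).1, h2⟩, (hu u h1).2⟩
    · intro u h
      exact (hu u (Multiset.mem_filter.1 h).1).2.1
    · rw [← mul_assoc, ← Multiset.prod_add, Multiset.filter_add_not, hprod])
  omega

end aux

/-- In a Mori monoid (a cancellative commutative monoid with ACC on divisorial ideals,
realized as a submonoid `M` of its quotient group `G`), every length set is finite and
nonempty. -/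
theorem mori_lengthSets_finite_nonempty {G : Type*} [CommGroup G] (M : Submonoid G)
    (hq : ∀ g : G, ∃ a ∈ M, ∃ b ∈ M, g = a * b⁻¹)
    (hacc : MoriACC M) :
    ∀ a ∈ M, (LengthSetOf M a).Finite ∧ (LengthSetOf M a).Nonempty := by
  classical
  intro a ha
  obtain ⟨n, hn⟩ := bounded M hacc ha
  have hlt : ∀ s : Multiset G, (∀ u ∈ s, u ∈ M ∧ u⁻¹ ∉ M) → s.prod = a → s.card ≤ n := by
    intro s hs hp
    by_contra! h
    exact hn ⟨s, h.le, fun u hu => ⟨(hs u hu).1, hs u hu⟩, 1, M.one_mem, by simpa using hp⟩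
  constructor
  · refine (Set.finite_Iic n).subset ?_
    rintro k (⟨-, rfl⟩ | ⟨l, rfl, hl, hp⟩)
    · exact Nat.zero_le _
    · have := hlt (l : Multiset G) (fun u hu => ⟨(hl u (by simpa using hu)).1,
        (hl u (by simpa using hu)).2.1⟩) (by simpa using hp)
      simpa using this
  · by_cases hu : a⁻¹ ∈ M
    · exact ⟨0, Or.inl ⟨hu, rfl⟩⟩
    let Q : ℕ → Prop := fun k => ∃ s : Multiset G, s.card = k ∧
      (∀ u ∈ s, u ∈ M ∧ u⁻¹ ∉ M) ∧ s.prod = a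
    have hQ1 : Q 1 := ⟨{a}, by simp, by simpa using ⟨ha, hu⟩, by simp⟩
    have hQle : ∀ k, Q k → k ≤ n := by
      rintro k ⟨s, rfl, hs, hp⟩
      exact hlt s hs hp
    obtain ⟨s, hcard, hs, hp⟩ := Nat.findGreatest_spec (P := Q) (hQle 1 hQ1) hQ1
    refine ⟨s.card, Or.inr ⟨s.toList, by simp, ?_, by simpa using hp⟩⟩
    intro x hx
    rw [Multiset.mem_toList] at hx
    refine ⟨(hs x hx).1, (hs x hx).2, ?_⟩
    rintro y z hy hz rfl
    by_contra! hyz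
    obtain ⟨t, rfl⟩ := Multiset.exists_cons_of_mem hx
    have hQ : Q (t.card + 2) := by
      refine ⟨y ::ₘ z ::ₘ t, by simp, ?_, ?_⟩
      · intro u hu
        rcases Multiset.mem_cons.1 hu with rfl | hu
        · exact ⟨hy, hyz.1⟩
        rcases Multiset.mem_cons.1 hu with rfl | hu
        · exact ⟨hz, hyz.2⟩
        exact hs u (Multiset.mem_cons_of_mem hu)
      · rw [← hp]; simp [mul_assoc]
    have := Nat.le_findGreatest (hQle _ hQ) hQ
    rw [← hcard, Multiset.card_cons] at this
    omega
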